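/- Let $d \geq 1$, $1 \leq p < \infty$ and $s \in \mathbb{R}$. Then there exist a constant $c > 0$ and $N \in \mathbb{N}$ such that for all $n \geq N$, $2^{ns} \| g_n \, \partial_{x_1} f_n \|_{L^p(\mathbb{R}^d)} \geq c$; in particular $\liminf_{n \to \infty} 2^{ns} \| g_n \, \partial_{x_1} f_n \|_{L^p(\mathbb{R}^d)} > 0$. -/

import Mathlib

open MeasureTheory
open scoped RealInnerProductSpace ENNReal

/-- The Fourier transform on `ℝ` with the convention `f̂(ξ) = ∫ f(x) e^{-i x ξ} dx`. -/
noncomputable def fourierTransform1 (f : ℝ → ℝ) (ξ : ℝ) : ℂ :=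
  ∫ x : ℝ, (f x : ℂ) * Complex.exp (-Complex.I * (x : ℂ) * (ξ : ℂ))

/-- The Fourier transform on `ℝ^d` with the convention `f̂(ξ) = ∫ f(x) e^{-i x·ξ} dx`. -/
noncomputable def fourierTransformD {d : ℕ} (f : EuclideanSpace ℝ (Fin d) → ℝ)
    (ξ : EuclideanSpace ℝ (Fin d)) : ℂ :=
  ∫ x : EuclideanSpace ℝ (Fin d),
    (f x : ℂ) * Complex.exp (-Complex.I * ((⟪x, ξ⟫ : ℝ) : ℂ))

/-- The profile `f_n(x) = 2^{-ns} φ(x₁) sin((17/12) 2^n x₁) φ(x₂) ⋯ φ(x_d)`. -/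
noncomputable def fprof (d : ℕ) (hd : 0 < d) (φ : ℝ → ℝ) (s : ℝ) (n : ℕ)
    (x : EuclideanSpace ℝ (Fin d)) : ℝ :=
  (2 : ℝ) ^ (-(n : ℝ) * s) * φ (x ⟨0, hd⟩) * Real.sin (17 / 12 * 2 ^ n * x ⟨0, hd⟩) *
    ∏ i ∈ Finset.univ.filter (fun i : Fin d => i ≠ ⟨0, hd⟩), φ (x i)

/-- The profile `g_n(x) = 2^{-n} φ(x₁) φ(x₂) ⋯ φ(x_d)`. -/
noncomputable def gprof (d : ℕ) (φ : ℝ → ℝ) (n : ℕ)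
    (x : EuclideanSpace ℝ (Fin d)) : ℝ :=
  (2 : ℝ) ^ (-(n : ℝ)) * ∏ i : Fin d, φ (x i)

/-- The partial derivative in the first coordinate. -/
noncomputable def pderivOne (d : ℕ) (hd : 0 < d) (f : EuclideanSpace ℝ (Fin d) → ℝ)
    (x : EuclideanSpace ℝ (Fin d)) : ℝ :=
  fderiv ℝ f x (EuclideanSpace.single ⟨0, hd⟩ 1)

/-!
Multiplied by `2^{ns}`, the product `g_n ∂₁f_n` is `(17/12) (φ ⊗ ⋯ ⊗ φ)² cos ⟪x, w_n⟫`, where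
`w_n = (17/12) 2ⁿ e₁` tends to infinity, plus a remainder of order `2⁻ⁿ`. Near a point where
`φ ⊗ ⋯ ⊗ φ` does not vanish, the Riemann–Lebesgue lemma applied to `cos² θ = (1 + cos 2θ) / 2` shows
that `|cos ⟪x, w_n⟫| ≥ 1/2` on at least an eighth of a fixed ball once `n` is large, and this bounds
the `L^p` norm from below. An upper bound on the norm is needed only because `ENNReal.toReal ⊤ = 0`
and a real `liminf` of an unbounded sequence is a junk value.
-/

open Filter Topology

section LpOfProducts

variable {ι 𝕜 : Type*} [Fintype ι] [NormedField 𝕜] {α : ι → Type*}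
  [∀ i, MeasurableSpace (α i)] {μ : ∀ i, Measure (α i)} [∀ i, SigmaFinite (μ i)]
  {f : ∀ i, α i → 𝕜} {p : ℝ≥0∞}

lemma aestronglyMeasurable_fintype_prod (hf : ∀ i, AEStronglyMeasurable (f i) (μ i)) :
    AEStronglyMeasurable (fun x : ∀ i, α i => ∏ i, f i (x i)) (Measure.pi μ) :=
  Finset.aestronglyMeasurable_fun_prod _ fun i _ =>
    (hf i).comp_quasiMeasurePreserving (Measure.quasiMeasurePreserving_eval μ i)

lemma memLp_top_fintype_prod (hf : ∀ i, MemLp (f i) ⊤ (μ i)) :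
    MemLp (fun x : ∀ i, α i => ∏ i, f i (x i)) ⊤ (Measure.pi μ) := by
  have hbound (i : ι) : ∀ᵐ x ∂Measure.pi μ, ‖f i (x i)‖ ≤ lpNorm (f i) ⊤ (μ i) :=
    Measure.tendsto_eval_ae_ae.eventually (ae_le_lpNorm_exponent_top (hf i))
  refine memLp_top_of_bound (aestronglyMeasurable_fintype_prod fun i => (hf i).1)
    (∏ i, lpNorm (f i) ⊤ (μ i)) ?_
  filter_upwards [eventually_all.2 hbound] with x hx
  rw [norm_prod]
  exact Finset.prod_le_prod (fun _ _ => norm_nonneg _) fun i _ => hx i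

lemma memLp_fintype_prod (hf : ∀ i, MemLp (f i) p (μ i)) :
    MemLp (fun x : ∀ i, α i => ∏ i, f i (x i)) p (Measure.pi μ) := by
  have hmeas := aestronglyMeasurable_fintype_prod fun i => (hf i).1
  rcases eq_or_ne p 0 with rfl | hp0
  · exact memLp_zero_iff_aestronglyMeasurable.2 hmeas
  rcases eq_or_ne p ⊤ with rfl | hptop
  · exact memLp_top_fintype_prod hf
  rw [← integrable_norm_rpow_iff hmeas hp0 hptop]
  simpa only [norm_prod, Real.finsetProd_rpow _ _ fun _ _ => norm_nonneg _] using
    Integrable.fintype_prod_dep fun i => (hf i).integrable_norm_rpow hp0 hptop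

end LpOfProducts

section Oscillation

lemma measureReal_div_four_add_integral_cos_le {α : Type*} [MeasurableSpace α] {μ : Measure α}
    [IsFiniteMeasure μ] {θ : α → ℝ} (hθ : Measurable θ) :
    μ.real Set.univ / 4 + (∫ x, Real.cos (2 * θ x) ∂μ) / 2 ≤
      μ.real {x | 1 / 2 ≤ |Real.cos (θ x)|} := by
  set S : Set α := {x | 1 / 2 ≤ |Real.cos (θ x)|}
  have hS : MeasurableSet S := measurableSet_le (by fun_prop) (by fun_prop)
  have hint : Integrable (fun x => Real.cos (2 * θ x)) μ :=
    .of_bound (by fun_prop) 1 (.of_forall fun x => Real.abs_cos_le_one _)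
  have hpointwise (x : α) : 1 / 4 + Real.cos (2 * θ x) / 2 ≤ S.indicator 1 x := by
    rw [Real.cos_two_mul, ← sq_abs]
    by_cases hx : x ∈ S
    · rw [Set.indicator_of_mem hx, Pi.one_apply]
      nlinarith [Real.abs_cos_le_one (θ x), abs_nonneg (Real.cos (θ x))]
    · rw [Set.indicator_of_notMem hx]
      have : |Real.cos (θ x)| < 1 / 2 := not_le.1 hx
      nlinarith [abs_nonneg (Real.cos (θ x))]
  calc μ.real Set.univ / 4 + (∫ x, Real.cos (2 * θ x) ∂μ) / 2
      = ∫ x, (1 / 4 + Real.cos (2 * θ x) / 2) ∂μ := by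
        rw [integral_add (integrable_const _) (hint.div_const 2), integral_const, integral_div,
          smul_eq_mul, mul_one_div]
    _ ≤ ∫ x, S.indicator 1 x ∂μ :=
        integral_mono ((integrable_const _).add (hint.div_const 2))
          ((integrable_const 1).indicator hS) hpointwise
    _ = μ.real S := integral_indicator_one hS

lemma tendsto_const_smul_cocompact {G₀ α : Type*} [GroupWithZero G₀] [MulAction G₀ α]
    [TopologicalSpace α] [ContinuousConstSMul G₀ α] {c : G₀} (hc : c ≠ 0) :
    Tendsto (fun x : α => c • x) (cocompact α) (cocompact α) :=
  (Homeomorph.smulOfNeZero c hc).isClosedEmbedding.tendsto_cocompact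

variable {V : Type*} [NormedAddCommGroup V] [InnerProductSpace ℝ V] [FiniteDimensional ℝ V]
  [MeasurableSpace V] [BorelSpace V]

lemma tendsto_integral_mul_cos_inner_cocompact {f : V → ℝ} (hf : Integrable f) :
    Tendsto (fun w : V => ∫ v, f v * Real.cos ⟪v, w⟫) (cocompact V) (𝓝 0) := by
  have hfourier := (tendsto_integral_exp_inner_smul_cocompact fun v => (f v : ℂ)).comp
    (tendsto_const_smul_cocompact (α := V) (inv_ne_zero Real.two_pi_pos.ne'))
  refine ((Complex.continuous_re.tendsto 0).comp hfourier).congr fun w => ?_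
  have hint := (Real.fourierIntegral_convergent_iff (f := fun v => (f v : ℂ))
    ((2 * Real.pi)⁻¹ • w)).2 hf.ofReal
  have hre (v : V) : (Real.fourierChar (-⟪v, (2 * Real.pi)⁻¹ • w⟫) • (f v : ℂ)).re =
      f v * Real.cos ⟪v, w⟫ := by
    have hphase : 2 * Real.pi * -⟪v, (2 * Real.pi)⁻¹ • w⟫ = -⟪v, w⟫ := by
      rw [inner_smul_right, mul_neg, mul_inv_cancel_left₀ Real.two_pi_pos.ne']
    rw [Circle.smul_def, Real.fourierChar_apply, hphase, smul_eq_mul, mul_comm,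
      Complex.re_ofReal_mul, Complex.exp_ofReal_mul_I_re, Real.cos_neg]
  exact (integral_re hint).symm.trans (integral_congr_ae (.of_forall hre))

lemma eventually_measureReal_half_le_abs_cos_inner {B : Set V} (hB : MeasurableSet B)
    (hBtop : volume B ≠ ⊤) :
    ∀ᶠ w in cocompact V,
      volume.real B / 8 ≤ volume.real (B ∩ {v | 1 / 2 ≤ |Real.cos ⟪v, w⟫|}) := by
  rcases (measureReal_nonneg (μ := volume) (s := B)).eq_or_lt with hzero | hpos
  · exact .of_forall fun w => by simp [← hzero]
  have hfinite : Fact (volume B < ⊤) := ⟨hBtop.lt_top⟩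
  have hcos : Tendsto (fun w : V => ∫ v in B, Real.cos (2 * ⟪v, w⟫)) (cocompact V) (𝓝 0) := by
    have hf : Integrable (B.indicator (1 : V → ℝ)) :=
      (integrable_indicator_iff hB).2 integrableOn_const
    refine ((tendsto_integral_mul_cos_inner_cocompact hf).comp
      (tendsto_const_smul_cocompact (two_ne_zero (α := ℝ)))).congr fun w => ?_
    rw [← integral_indicator hB]
    refine integral_congr_ae (.of_forall fun v => ?_)
    by_cases hv : v ∈ B <;> simp [hv, inner_smul_right]
  filter_upwards [hcos.eventually_const_lt (show -(volume.real B / 4) < 0 by linarith)] with w hw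
  have hmass := measureReal_div_four_add_integral_cos_le (μ := volume.restrict B)
    (θ := fun v => ⟪v, w⟫) (by fun_prop)
  rw [measureReal_restrict_apply_univ, measureReal_restrict_apply' hB, Set.inter_comm] at hmass
  linarith

lemma liminf_eLpNorm_pos_of_tendsto_sub_mul_cos_inner {ι : Type*} {l : Filter ι} {u : ι → V → ℝ}
    {w : ι → V} {A : ℝ} {z : V} {p : ℝ≥0∞} (hp : p ≠ 0) (hA : A ≠ 0)
    (hw : Tendsto w l (cocompact V))
    (hu : Tendsto (fun q : ι × V => u q.1 q.2 - A * Real.cos ⟪q.2, w q.1⟫) (l ×ˢ 𝓝 z) (𝓝 0)) :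
    0 < liminf (fun i => eLpNorm (u i) p volume) l := by
  have hclose : ∀ᶠ q in l ×ˢ 𝓝 z, |u q.1 q.2 - A * Real.cos ⟪q.2, w q.1⟫| < |A| / 4 := by
    simpa using hu.abs.eventually_lt_const (by simpa using hA)
  obtain ⟨P, hP, Q, hQ, hPQ⟩ := eventually_prod_iff.1 hclose
  obtain ⟨ε, hε, hball⟩ := Metric.eventually_nhds_iff_ball.1 hQ
  set B := Metric.ball z ε
  have hBpos : 0 < volume.real B :=
    ENNReal.toReal_pos (Metric.measure_ball_pos volume z hε).ne' measure_ball_lt_top.ne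
  set m : ℝ≥0∞ := .ofReal (volume.real B / 8)
  have hm : 0 < m := ENNReal.ofReal_pos.2 (by positivity)
  have hbound_pos : 0 < ‖A / 4‖ₑ * m ^ (1 / p.toReal) :=
    ENNReal.mul_pos (by simpa using hA) (ENNReal.rpow_pos hm ENNReal.ofReal_ne_top).ne'
  suffices ∀ᶠ i in l, ‖A / 4‖ₑ * m ^ (1 / p.toReal) ≤ eLpNorm (u i) p volume from
    lt_of_lt_of_le hbound_pos (le_liminf_of_le (by isBoundedDefault) this)
  filter_upwards [hP, hw.eventually (eventually_measureReal_half_le_abs_cos_inner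
    (B := B) measurableSet_ball measure_ball_lt_top.ne)] with i hi hmass
  set S := B ∩ {v | 1 / 2 ≤ |Real.cos ⟪v, w i⟫|}
  have hlower (v : V) (hv : v ∈ S) : |A / 4| ≤ |u i v| := by
    have herror := hPQ hi (hball v hv.1)
    have hcos : 1 / 2 ≤ |Real.cos ⟪v, w i⟫| := hv.2
    have hmain : |A| / 2 ≤ |A * Real.cos ⟪v, w i⟫| := by
      rw [abs_mul, div_eq_mul_one_div]
      gcongr
    rw [abs_div, abs_of_pos (four_pos (α := ℝ))]
    linarith [abs_sub_abs_le_abs_sub (A * Real.cos ⟪v, w i⟫) (u i v),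
      abs_sub_comm (u i v) (A * Real.cos ⟪v, w i⟫)]
  have hmS : m ≤ volume S := ENNReal.ofReal_le_of_le_toReal hmass
  have hS : MeasurableSet S :=
    measurableSet_ball.inter <| measurableSet_le measurable_const <|
      Continuous.measurable (by fun_prop)
  calc ‖A / 4‖ₑ * m ^ (1 / p.toReal)
      ≤ ‖A / 4‖ₑ * volume S ^ (1 / p.toReal) := by gcongr
    _ = eLpNorm (S.indicator fun _ => A / 4) p volume :=
        (eLpNorm_indicator_const' hS (hm.trans_le hmS).ne' hp).symm
    _ ≤ eLpNorm (u i) p volume := eLpNorm_mono fun v => by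
      by_cases hv : v ∈ S
      · simpa only [Set.indicator_of_mem hv, Real.norm_eq_abs] using hlower v hv
      · simp only [Set.indicator_of_notMem hv, norm_zero, norm_nonneg]

lemma liminf_eLpNorm_mul_cos_add_mul_sin_pos {ι : Type*} {l : Filter ι} {a b : V → ℝ}
    {w : ι → V} {ε : ι → ℝ} {z : V} {p : ℝ≥0∞} (hp : p ≠ 0) (ha : ContinuousAt a z)
    (haz : a z ≠ 0) (hb : ContinuousAt b z) (hw : Tendsto w l (cocompact V))
    (hε : Tendsto ε l (𝓝 0)) :
    0 < liminf (fun i => eLpNorm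
      (fun x => a x * Real.cos ⟪x, w i⟫ + ε i * (b x * Real.sin ⟪x, w i⟫)) p volume) l := by
  refine liminf_eLpNorm_pos_of_tendsto_sub_mul_cos_inner hp haz hw (z := z) ?_
  have hleading : Tendsto (fun q : ι × V => Real.cos ⟪q.2, w q.1⟫ * (a q.2 - a z))
      (l ×ˢ 𝓝 z) (𝓝 0) :=
    bdd_le_mul_tendsto_zero' 1 (.of_forall fun q => Real.abs_cos_le_one _)
      ((tendsto_sub_nhds_zero_iff.2 ha).comp tendsto_snd)
  have hremainder : Tendsto (fun q : ι × V => Real.sin ⟪q.2, w q.1⟫ * (ε q.1 * b q.2))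
      (l ×ˢ 𝓝 z) (𝓝 0) :=
    bdd_le_mul_tendsto_zero' 1 (.of_forall fun q => Real.abs_sin_le_one _) <| by
      simpa only [zero_mul, Function.comp_def] using
        (hε.comp tendsto_fst).mul (hb.tendsto.comp tendsto_snd)
  have hsum := hleading.add hremainder
  rw [add_zero] at hsum
  exact hsum.congr fun q => by ring

lemma eLpNorm_mul_cos_add_mul_sin_le {α : Type*} [MeasurableSpace α] {μ : Measure α}
    (a b θ : α → ℝ) {ε : ℝ} (hε : |ε| ≤ 1) (p : ℝ≥0∞) :
    eLpNorm (fun x => a x * Real.cos (θ x) + ε * (b x * Real.sin (θ x))) p μ ≤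
      eLpNorm (fun x => |a x| + |b x|) p μ := by
  refine eLpNorm_mono_real fun x => (norm_add_le _ _).trans (add_le_add ?_ ?_)
  · rw [norm_mul]
    exact mul_le_of_le_one_right (abs_nonneg _) (Real.abs_cos_le_one _)
  · rw [norm_mul, norm_mul]
    exact (mul_le_of_le_one_left (by positivity) hε).trans
      (mul_le_of_le_one_right (abs_nonneg _) (Real.abs_sin_le_one _))

end Oscillation

section PureTensor

variable {ι : Type*} [Fintype ι]

/-- The tensor product `x ↦ ∏ i, ψ i (x i)` of functions of one real variable, as a function on
Euclidean space. -/
def pureTensor (ψ : ι → ℝ → ℝ) (x : EuclideanSpace ℝ ι) : ℝ :=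
  ∏ i, ψ i (x i)

variable {ψ χ : ι → ℝ → ℝ}

lemma pureTensor_mul_pureTensor (x : EuclideanSpace ℝ ι) :
    pureTensor ψ x * pureTensor χ x = pureTensor (ψ * χ) x :=
  Finset.prod_mul_distrib.symm

lemma continuous_pureTensor (hψ : ∀ i, Continuous (ψ i)) : Continuous (pureTensor ψ) :=
  continuous_finsetProd _ fun i _ => (hψ i).comp (by fun_prop)

lemma memLp_pureTensor {p : ℝ≥0∞} (hψ : ∀ i, MemLp (ψ i) p) : MemLp (pureTensor ψ) p :=
  (memLp_fintype_prod hψ).comp_measurePreserving (PiLp.volume_preserving_ofLp ι)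

variable [DecidableEq ι]

lemma pureTensor_update (k : ι) (f : ℝ → ℝ) (x : EuclideanSpace ℝ ι) :
    pureTensor (Function.update ψ k f) x = f (x k) * ∏ i with i ≠ k, ψ i (x i) := by
  rw [pureTensor, ← Finset.mul_prod_erase _ _ (Finset.mem_univ k), Function.update_self,
    Finset.filter_ne']
  congr 1
  exact Finset.prod_congr rfl fun i hi => by rw [Function.update_of_ne (Finset.ne_of_mem_erase hi)]

lemma fderiv_pureTensor_single {x : EuclideanSpace ℝ ι}
    (hψ : ∀ i, DifferentiableAt ℝ (ψ i) (x i)) (k : ι) :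
    fderiv ℝ (pureTensor ψ) x (EuclideanSpace.single k 1) =
      pureTensor (Function.update ψ k (deriv (ψ k))) x := by
  have hfactor (i : ι) : HasFDerivAt (fun y : EuclideanSpace ℝ ι => ψ i (y i))
      (deriv (ψ i) (x i) • EuclideanSpace.proj i) x :=
    (hψ i).hasDerivAt.comp_hasFDerivAt x (EuclideanSpace.proj (𝕜 := ℝ) i).hasFDerivAt
  have hprod := HasFDerivAt.finsetProd (u := Finset.univ) fun i _ => hfactor i
  rw [pureTensor_update, Finset.filter_ne']
  refine (congrArg (· (EuclideanSpace.single k 1)) hprod.fderiv).trans ?_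
  simp [mul_comm]

end PureTensor

section Profiles

variable {d : ℕ} (hd : 0 < d) (φ : ℝ → ℝ) (n : ℕ)

/-- The frequency vector `(17/12) 2ⁿ e₁` of the oscillating factor of `f_n`. -/
noncomputable def profileFrequency : EuclideanSpace ℝ (Fin d) :=
  EuclideanSpace.single ⟨0, hd⟩ (17 / 12 * 2 ^ n)

/-- The product `2^{ns} g_n ∂₁f_n` for differentiable `φ`, which does not depend on `s`, expanded
into its leading part and the remainder coming from the derivative of the envelope of `f_n`. -/
noncomputable def rescaledProduct (x : EuclideanSpace ℝ (Fin d)) : ℝ :=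
  17 / 12 * pureTensor (fun _ => φ * φ) x * Real.cos ⟪x, profileFrequency hd n⟫ +
    (1 / 2) ^ n * (pureTensor (Function.update (fun _ => φ * φ) ⟨0, hd⟩ (φ * deriv φ)) x *
      Real.sin ⟪x, profileFrequency hd n⟫)

variable {φ}

lemma inner_profileFrequency (x : EuclideanSpace ℝ (Fin d)) :
    ⟪x, profileFrequency hd n⟫ = 17 / 12 * 2 ^ n * x ⟨0, hd⟩ := by
  simp [profileFrequency, EuclideanSpace.inner_single_right]

lemma tendsto_profileFrequency_cocompact :
    Tendsto (profileFrequency hd) atTop (cocompact (EuclideanSpace ℝ (Fin d))) := by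
  rw [← Metric.cobounded_eq_cocompact, ← tendsto_norm_atTop_iff_cobounded]
  have hnorm (n : ℕ) : ‖profileFrequency hd n‖ = 17 / 12 * 2 ^ n := by
    rw [profileFrequency, PiLp.norm_single, Real.norm_of_nonneg (by positivity)]
  simp only [hnorm]
  exact (tendsto_pow_atTop_atTop_of_one_lt one_lt_two).const_mul_atTop (by norm_num)

lemma fprof_eq_smul_pureTensor (s : ℝ) :
    fprof d hd φ s n = (2 : ℝ) ^ (-(n : ℝ) * s) • pureTensor
      (Function.update (fun _ => φ) ⟨0, hd⟩ fun t => φ t * Real.sin (17 / 12 * 2 ^ n * t)) := by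
  funext x
  rw [Pi.smul_apply, pureTensor_update, fprof, smul_eq_mul]
  ring

lemma pderivOne_fprof (hφ : Differentiable ℝ φ) (s : ℝ) (x : EuclideanSpace ℝ (Fin d)) :
    pderivOne d hd (fprof d hd φ s n) x = (2 : ℝ) ^ (-(n : ℝ) * s) *
      (pureTensor (Function.update (fun _ => φ) ⟨0, hd⟩ (deriv φ)) x *
          Real.sin ⟪x, profileFrequency hd n⟫ +
        17 / 12 * 2 ^ n * pureTensor (fun _ => φ) x * Real.cos ⟪x, profileFrequency hd n⟫) := by
  set f : ℝ → ℝ := fun t => φ t * Real.sin (17 / 12 * 2 ^ n * t)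
  have hf : Differentiable ℝ f := by fun_prop
  have hderiv (t : ℝ) : deriv f t = deriv φ t * Real.sin (17 / 12 * 2 ^ n * t) +
      φ t * (Real.cos (17 / 12 * 2 ^ n * t) * (17 / 12 * 2 ^ n)) := by
    simpa using
      ((hφ t).hasDerivAt.fun_mul ((hasDerivAt_id t).const_mul (17 / 12 * 2 ^ n)).sin).deriv
  have hfactors : ∀ i, Differentiable ℝ (Function.update (fun _ : Fin d => φ) ⟨0, hd⟩ f i) :=
    (Function.forall_update_iff _ fun _ => Differentiable ℝ).2 ⟨hf, fun _ _ => hφ⟩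
  have hself : pureTensor (fun _ => φ) x = φ (x ⟨0, hd⟩) * ∏ i with i ≠ ⟨0, hd⟩, φ (x i) := by
    rw [← pureTensor_update, Function.update_eq_self]
  rw [pderivOne, fprof_eq_smul_pureTensor, fderiv_const_smul_field, Pi.smul_apply,
    smul_apply, fderiv_pureTensor_single fun i => (hfactors i).differentiableAt,
    Function.update_self, Function.update_idem, pureTensor_update, pureTensor_update, hself,
    inner_profileFrequency, hderiv, smul_eq_mul]
  ring

lemma gprof_mul_pderivOne_fprof (hφ : Differentiable ℝ φ) (s : ℝ)
    (x : EuclideanSpace ℝ (Fin d)) :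
    gprof d φ n x * pderivOne d hd (fprof d hd φ s n) x =
      (2 : ℝ) ^ (-(n : ℝ) * s) * rescaledProduct hd φ n x := by
  have hg : gprof d φ n x = (1 / 2) ^ n * pureTensor (fun _ => φ) x := by
    rw [gprof, pureTensor, Real.rpow_neg zero_le_two, Real.rpow_natCast, one_div, inv_pow]
  have hsq : pureTensor (fun _ => φ * φ) x =
      pureTensor (fun _ => φ) x * pureTensor (fun _ => φ) x :=
    (pureTensor_mul_pureTensor x).symm
  have hcross : pureTensor (Function.update (fun _ => φ * φ) ⟨0, hd⟩ (φ * deriv φ)) x =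
      pureTensor (fun _ => φ) x *
        pureTensor (Function.update (fun _ => φ) ⟨0, hd⟩ (deriv φ)) x := by
    rw [pureTensor_mul_pureTensor]
    congr 1
    funext i
    rcases eq_or_ne i ⟨0, hd⟩ with rfl | hi <;> simp [*]
  have hscale : (1 / 2 : ℝ) ^ n * 2 ^ n = 1 := by rw [← mul_pow]; norm_num
  rw [hg, pderivOne_fprof hd n hφ, rescaledProduct, hsq, hcross]
  linear_combination (17 / 12 * (2 : ℝ) ^ (-(n : ℝ) * s) * pureTensor (fun _ => φ) x ^ 2 *
    Real.cos ⟪x, profileFrequency hd n⟫) * hscale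

lemma rpow_mul_toReal_eLpNorm_gprof_mul_pderivOne_fprof (hφ : Differentiable ℝ φ) (s : ℝ)
    (p : ℝ≥0∞) :
    (2 : ℝ) ^ ((n : ℝ) * s) *
        (eLpNorm (fun x => gprof d φ n x * pderivOne d hd (fprof d hd φ s n) x) p volume).toReal =
      (eLpNorm (rescaledProduct hd φ n) p volume).toReal := by
  have hfun : (fun x => gprof d φ n x * pderivOne d hd (fprof d hd φ s n) x) =
      (2 : ℝ) ^ (-(n : ℝ) * s) • rescaledProduct hd φ n :=
    funext (gprof_mul_pderivOne_fprof hd n hφ s)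
  have hcancel : (2 : ℝ) ^ ((n : ℝ) * s) * 2 ^ (-(n : ℝ) * s) = 1 := by
    rw [← Real.rpow_add two_pos, neg_mul, add_neg_cancel, Real.rpow_zero]
  rw [hfun, eLpNorm_const_smul, ENNReal.toReal_mul, toReal_enorm,
    Real.norm_of_nonneg (by positivity), ← mul_assoc, hcancel, one_mul]

lemma liminf_eLpNorm_rescaledProduct_pos (hφ : ContDiff ℝ 1 φ) (hφ0 : φ ≠ 0) {p : ℝ≥0∞}
    (hp : p ≠ 0) :
    0 < liminf (fun n => eLpNorm (rescaledProduct hd φ n) p volume) atTop := by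
  obtain ⟨a, ha⟩ := Function.ne_iff.1 hφ0
  have hsq : Continuous (φ * φ) := hφ.continuous.mul hφ.continuous
  have hcross : Continuous (φ * deriv φ) := hφ.continuous.mul (hφ.continuous_deriv le_rfl)
  have hleading := (continuous_pureTensor fun _ : Fin d => hsq).const_mul (17 / 12)
  have hremainder := continuous_pureTensor <|
    (Function.forall_update_iff (fun _ : Fin d => φ * φ) (a := ⟨0, hd⟩) fun _ => Continuous).2
      ⟨hcross, fun _ _ => hsq⟩
  exact liminf_eLpNorm_mul_cos_add_mul_sin_pos (z := WithLp.toLp 2 fun _ => a) hp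
    hleading.continuousAt
    (mul_ne_zero (by norm_num) (Finset.prod_ne_zero_iff.2 fun _ _ => mul_ne_zero ha ha))
    hremainder.continuousAt (tendsto_profileFrequency_cocompact hd)
    (tendsto_pow_atTop_nhds_zero_of_lt_one (by norm_num) (by norm_num))

lemma exists_forall_eLpNorm_rescaledProduct_le {p : ℝ≥0∞} (hsq : MemLp (φ * φ) p)
    (hcross : MemLp (φ * deriv φ) p) :
    ∃ M ≠ ⊤, ∀ n, eLpNorm (rescaledProduct hd φ n) p volume ≤ M := by
  have hleading := (memLp_pureTensor fun _ : Fin d => hsq).const_mul (17 / 12)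
  have hremainder := memLp_pureTensor <|
    (Function.forall_update_iff (fun _ : Fin d => φ * φ) (a := ⟨0, hd⟩) fun _ f => MemLp f p).2
      ⟨hcross, fun _ _ => hsq⟩
  refine ⟨_, (hleading.norm.add hremainder.norm).eLpNorm_ne_top, fun n => ?_⟩
  refine eLpNorm_mul_cos_add_mul_sin_le _ _ _ ?_ p
  rw [abs_of_nonneg (by positivity)]
  exact pow_le_one₀ (by norm_num) (by norm_num)

theorem gprof_mul_pderiv_fprof_liminf_pos_general (hφ : ContDiff ℝ 1 φ) (hφ0 : φ ≠ 0)
    {p : ℝ≥0∞} (hp : p ≠ 0) (hsq : MemLp (φ * φ) p) (hcross : MemLp (φ * deriv φ) p) (s : ℝ) :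
    (∃ c > (0 : ℝ), ∃ N : ℕ, ∀ n ≥ N,
      c ≤ (2 : ℝ) ^ ((n : ℝ) * s) *
        (eLpNorm (fun x : EuclideanSpace ℝ (Fin d) =>
          gprof d φ n x * pderivOne d hd (fprof d hd φ s n) x) p volume).toReal) ∧
    0 < liminf
      (fun n : ℕ => (2 : ℝ) ^ ((n : ℝ) * s) *
        (eLpNorm (fun x : EuclideanSpace ℝ (Fin d) =>
          gprof d φ n x * pderivOne d hd (fprof d hd φ s n) x) p volume).toReal)
      atTop := by
  simp only [rpow_mul_toReal_eLpNorm_gprof_mul_pderivOne_fprof hd _ (hφ.differentiable one_ne_zero)]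
  obtain ⟨M, hM, hle⟩ := exists_forall_eLpNorm_rescaledProduct_le hd hsq hcross
  have hliminf :
      0 < liminf (fun n => (eLpNorm (rescaledProduct hd φ n) p volume).toReal) atTop := by
    rw [ENNReal.liminf_toReal_eq hM (.of_forall hle)]
    refine ENNReal.toReal_pos (liminf_eLpNorm_rescaledProduct_pos hd hφ hφ0 hp).ne' ?_
    exact ne_top_of_le_ne_top hM <|
      (liminf_le_liminf (.of_forall hle)).trans (liminf_const M).le
  refine ⟨?_, hliminf⟩
  obtain ⟨c, hc, hclt⟩ := exists_between hliminf
  have hev := eventually_lt_of_lt_liminf hclt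
    (isBoundedUnder_of ⟨0, fun n => ENNReal.toReal_nonneg⟩)
  exact ⟨c, hc, eventually_atTop.1 (hev.mono fun n => le_of_lt)⟩

end Profiles

lemma ne_zero_of_fourierTransform1_ne_zero {f : ℝ → ℝ} {ξ : ℝ} (h : fourierTransform1 f ξ ≠ 0) :
    f ≠ 0 := by
  rintro rfl
  simp [fourierTransform1] at h

/-- The quantities `2^{ns} ‖g_n ∂₁ f_n‖_{L^p(ℝ^d)}` are bounded away from zero
for large `n`; in particular their liminf is positive. -/
theorem gprof_mul_pderiv_fprof_liminf_pos (d : ℕ) (hd : 1 ≤ d) (φ : SchwartzMap ℝ ℝ)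
    (hφ1 : ∀ ξ : ℝ, |ξ| ≤ (4 : ℝ) ^ (-(d : ℤ)) → fourierTransform1 (fun x => φ x) ξ = 1)
    (hφ0 : ∀ ξ : ℝ, (2 : ℝ) ^ (-(d : ℤ)) ≤ |ξ| → fourierTransform1 (fun x => φ x) ξ = 0)
    (p : ℝ≥0∞) (hp : 1 ≤ p) (hp' : p ≠ ⊤) (s : ℝ) :
    (∃ c > (0 : ℝ), ∃ N : ℕ, ∀ n ≥ N,
      c ≤ (2 : ℝ) ^ ((n : ℝ) * s) *
        (eLpNorm (fun x : EuclideanSpace ℝ (Fin d) =>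
          gprof d (fun y => φ y) n x * pderivOne d hd (fprof d hd (fun y => φ y) s n) x)
            p volume).toReal) ∧
    0 < Filter.liminf
      (fun n : ℕ => (2 : ℝ) ^ ((n : ℝ) * s) *
        (eLpNorm (fun x : EuclideanSpace ℝ (Fin d) =>
          gprof d (fun y => φ y) n x * pderivOne d hd (fprof d hd (fun y => φ y) s n) x)
            p volume).toReal)
      Filter.atTop := by
  have hφ : (φ : ℝ → ℝ) ≠ 0 :=
    ne_zero_of_fourierTransform1_ne_zero (ξ := 0) (by simp [hφ1 0 (by simp)])
  exact gprof_mul_pderiv_fprof_liminf_pos_general hd (φ.smooth 1) hφ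
    (one_pos.trans_le hp).ne' ((φ.memLp ⊤).mul (φ.memLp p))
    (((SchwartzMap.derivCLM ℝ ℝ φ).memLp ⊤).mul (φ.memLp p)) s
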